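/- arXiv:1402.4594 — 2 statements merged into one kernel-verified Lean document; each statement's English description precedes it below -/
import Mathlib

section
/- For n ≥ 3, the ring of invariants of S_n acting on the quotient polynomial ring F_2[x_1,...,x_n]/(x_1 + ... + x_n) is the polynomial algebra generated by the images of the elementary symmetric polynomials w_2, ..., w_n; in particular these images are algebraically independent and generate the full invariant ring. -/
open MvPolynomial

/-- The ideal of `F_2[x_1, …, x_n]` generated by `x_1 + ⋯ + x_n`. -/
noncomputable def sumIdeal (n : ℕ) : Ideal (MvPolynomial (Fin n) (ZMod 2)) :=
  Ideal.span {∑ i : Fin n, X i}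

/-- The action of a permutation `σ ∈ S_n` on the quotient ring
`F_2[x_1, …, x_n]/(x_1 + ⋯ + x_n)`, descended from permuting the variables. -/
noncomputable def quotAct (n : ℕ) (σ : Equiv.Perm (Fin n)) :
    MvPolynomial (Fin n) (ZMod 2) ⧸ sumIdeal n →+*
      MvPolynomial (Fin n) (ZMod 2) ⧸ sumIdeal n :=
  Ideal.quotientMap (sumIdeal n) (rename σ).toRingHom (by
    rw [sumIdeal, Ideal.span_le]
    intro x hx
    simp only [Set.mem_singleton_iff] at hx
    subst hx
    simp only [SetLike.mem_coe, Ideal.mem_comap, AlgHom.toRingHom_eq_coe,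
      RingHom.coe_coe, map_sum, rename_X]
    rw [Equiv.sum_comp σ fun i => (X i : MvPolynomial (Fin n) (ZMod 2))]
    exact Ideal.subset_span rfl)

/-!
The substitution `x_j ↦ x_i` has kernel generated by `x_j - x_i`, and a linear form with a regular
coefficient is a regular polynomial. So divisibility by `x_j - x_i` survives cancelling another
difference of variables, or the sum `s` of all the variables; hence the Vandermonde polynomial `V`
divides every antisymmetrization, and `V` is regular modulo `s`.

Let `f` be invariant modulo `s`, and let `δ = ∏ i, x_i ^ i`, whose antisymmetrization is `V`.
Modulo `s`, the antisymmetrization `V * g` of `δ * f` equals `V * f`. Cancelling `V` shows that `g`,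
which is symmetric, lifts the class of `f`. The fundamental theorem of symmetric polynomials now
gives the generators, as `w_1 = s` vanishes in the quotient. For independence, a polynomial in
`w_2, …, w_n` divisible by `w_1` has a symmetric cofactor, because `w_1` is regular; comparing
polynomials in the `w_i`, it is zero.
-/

open Equiv

section Divisibility

variable {M ι : Type*} [CommMonoid M]

lemma dvd_of_dvd_prod_mul {s : Finset ι} {a : ι → M} {d x : M}
    (hd : ∀ i ∈ s, ∀ y, d ∣ a i * y → d ∣ y) (h : d ∣ (∏ i ∈ s, a i) * x) : d ∣ x := by
  classical
  induction s using Finset.induction_on with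
  | empty => simpa using h
  | insert i s hi ih =>
    rw [Finset.prod_insert hi, mul_assoc] at h
    exact ih (fun j hj => hd j (Finset.mem_insert_of_mem hj))
      (hd i (Finset.mem_insert_self i s) _ h)

lemma prod_dvd_of_pairwise_dvd_cancel {s : Finset ι} {a : ι → M} {x : M}
    (ha : (s : Set ι).Pairwise fun i j => ∀ y, a i ∣ a j * y → a i ∣ y)
    (h : ∀ i ∈ s, a i ∣ x) : ∏ i ∈ s, a i ∣ x := by
  classical
  induction s using Finset.induction_on with
  | empty => simp
  | insert i s hi ih =>
    rw [Finset.coe_insert, Set.pairwise_insert] at ha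
    obtain ⟨y, rfl⟩ := ih ha.1 fun j hj => h j (Finset.mem_insert_of_mem hj)
    have hy : a i ∣ y := dvd_of_dvd_prod_mul
      (fun j hj => (ha.2 j hj (ne_of_mem_of_not_mem hj hi).symm).1)
      (h i (Finset.mem_insert_self i s))
    rw [Finset.prod_insert hi, mul_comm]
    exact mul_dvd_mul_left _ hy

lemma dvd_of_dvd_mul_of_dvd_cancel {a b x : M} (ha : IsRegular a)
    (hab : ∀ y, a ∣ b * y → a ∣ y) (h : b ∣ a * x) : b ∣ x := by
  obtain ⟨y, hy⟩ := h
  obtain ⟨z, rfl⟩ := hab y ⟨x, hy.symm⟩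
  exact ⟨z, ha.left (by simpa [mul_left_comm] using hy)⟩

end Divisibility

section LinearForms

variable {σ R : Type*} [CommRing R]

lemma isRegular_sumSMulX {c : σ →₀ R} {k : σ} (hk : IsRegular (c k)) :
    IsRegular (sumSMulX c) := by
  classical
  -- Translating `x_k` by `T` turns the coefficient of `x_k` into a leading coefficient in `T`.
  let shift : MvPolynomial σ R →ₐ[R] Polynomial (MvPolynomial σ R) :=
    aeval fun i => Polynomial.C (X i) + if i = k then Polynomial.X else 0
  have shift_injective : Function.Injective shift := by
    have hinv : ((Polynomial.aeval (0 : MvPolynomial σ R)).restrictScalars R).comp shift =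
        AlgHom.id R _ := by
      ext i : 1
      by_cases hi : i = k <;> simp [shift, hi]
    exact Function.LeftInverse.injective (DFunLike.congr_fun hinv)
  have shift_sumSMulX : shift (sumSMulX c) =
      Polynomial.C (C (c k)) * Polynomial.X + Polynomial.C (sumSMulX c) := by
    clear hk
    induction c using Finsupp.induction_linear with
    | zero => simp
    | add c d hc hd => simp only [map_add, hc, hd, Finsupp.add_apply]; ring
    | single i r =>
      rcases eq_or_ne i k with rfl | hi
      · simp [sumSMulX, shift, smul_eq_C_mul]
        ring
      · simp [sumSMulX, shift, smul_eq_C_mul, hi]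
  have hC : IsRegular (C (c k) : MvPolynomial σ R) := hk.monomial
  cases subsingleton_or_nontrivial R
  · exact (isUnit_of_subsingleton _).isRegular
  rw [isRegular_iff_mem_nonZeroDivisors] at hC ⊢
  refine mem_nonZeroDivisors_of_injective shift_injective
    (Polynomial.mem_nonZeroDivisors_of_leadingCoeff ?_)
  rwa [shift_sumSMulX, Polynomial.leadingCoeff_linear (nonZeroDivisors.ne_zero hC)]

lemma isRegular_X_sub_X {i j : σ} (h : i ≠ j) :
    IsRegular (X j - X i : MvPolynomial σ R) := by
  classical
  have hc : IsRegular ((Finsupp.single j 1 - Finsupp.single i 1 : σ →₀ R) j) := by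
    simp [h, isRegular_one]
  simpa [sumSMulX] using isRegular_sumSMulX hc

lemma isRegular_sum_X_comp {ι : Type*} [Fintype ι] [DecidableEq σ] (u : ι → σ) (k : σ)
    (hk : IsRegular (Fintype.card {i // u i = k} : R)) :
    IsRegular (∑ i, X (u i) : MvPolynomial σ R) := by
  have hc : IsRegular ((∑ i, Finsupp.single (u i) 1 : σ →₀ R) k) := by
    simpa [Finsupp.single_apply, Fintype.card_subtype] using hk
  simpa [sumSMulX] using isRegular_sumSMulX hc

lemma isRegular_sum_X [Fintype σ] [Nonempty σ] :
    IsRegular (∑ i, X i : MvPolynomial σ R) := by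
  classical
  obtain ⟨k⟩ := ‹Nonempty σ›
  exact isRegular_sum_X_comp id k (by simp [isRegular_one])

lemma X_sub_X_dvd_iff [DecidableEq σ] {i j : σ} {f : MvPolynomial σ R} :
    X j - X i ∣ f ↔ rename (Function.update id j i) f = 0 := by
  refine ⟨?_, fun hf => ?_⟩
  · rintro ⟨g, rfl⟩
    by_cases hij : i = j <;> simp [hij]
  · let I : Ideal (MvPolynomial σ R) := Ideal.span {X j - X i}
    have hmk : (Ideal.Quotient.mkₐ R I).comp (rename (Function.update id j i)) =
        Ideal.Quotient.mkₐ R I := by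
      ext k
      rcases eq_or_ne k j with rfl | hk
      · simpa using (Ideal.Quotient.eq.2 (Ideal.mem_span_singleton_self _)).symm
      · simp [hk]
    rw [← Ideal.mem_span_singleton, ← Ideal.Quotient.eq_zero_iff_mem]
    simpa [hf] using (DFunLike.congr_fun hmk f).symm

lemma X_sub_X_dvd_of_dvd_mul [DecidableEq σ] {i j : σ} {f g : MvPolynomial σ R}
    (hg : IsRegular (rename (Function.update id j i) g)) (h : X j - X i ∣ g * f) :
    X j - X i ∣ f := by
  rw [X_sub_X_dvd_iff] at h ⊢
  rwa [map_mul, hg.left.mul_left_eq_zero_iff] at h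

lemma X_sub_X_dvd_of_dvd_X_sub_X_mul {i j k l : σ} (hkl : k ≠ l) (hne : s(i, j) ≠ s(k, l))
    {f : MvPolynomial σ R} (h : X j - X i ∣ (X l - X k) * f) : X j - X i ∣ f := by
  classical
  refine X_sub_X_dvd_of_dvd_mul ?_ h
  rw [map_sub, rename_X, rename_X]
  refine isRegular_X_sub_X ?_
  simp only [Function.update_apply, id]
  grind

lemma X_sub_X_dvd_of_dvd_sum_X_mul [Fintype σ] {i j : σ} (hij : i ≠ j)
    (h2 : Fintype.card σ = 2 → IsRegular (2 : R)) {f : MvPolynomial σ R}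
    (h : X j - X i ∣ (∑ k, X k) * f) : X j - X i ∣ f := by
  classical
  refine X_sub_X_dvd_of_dvd_mul ?_ h
  simp only [map_sum, rename_X]
  by_cases hk : ∃ k, k ≠ i ∧ k ≠ j
  · obtain ⟨k, hki, hkj⟩ := hk
    refine isRegular_sum_X_comp _ k ?_
    have hfib : ∀ l, Function.update id j i l = k ↔ l = k := by
      simp only [Function.update_apply, id]
      grind
    simp [hfib, isRegular_one]
  · have hpair : ∀ l, l = i ∨ l = j := fun l => by
      by_contra! hl
      exact hk ⟨l, hl⟩
    have hcard : Fintype.card σ = 2 := by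
      rw [← Finset.card_univ, ← Finset.card_pair hij]
      congr 1
      ext l
      simpa using hpair l
    have hfib : ∀ l, Function.update id j i l = i := fun l => by
      rcases hpair l with rfl | rfl <;> simp [hij]
    exact isRegular_sum_X_comp _ i (by simpa [hfib, hcard] using h2 hcard)

end LinearForms

section Cancellation

variable {σ τ R : Type*} [CommSemiring R]

lemma isSymmetric_of_isRegular_mul {s f : MvPolynomial σ R} (hs : IsRegular s)
    (hsymm : s.IsSymmetric) (h : (s * f).IsSymmetric) : f.IsSymmetric := fun e =>
  hs.left (by simpa [hsymm e] using h e)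

lemma eq_zero_of_X_dvd_rename {u : σ → τ}
    (hu : Function.Injective u) {i : τ} (hi : i ∉ Set.range u) {p : MvPolynomial σ R}
    (h : X i ∣ rename u p) : p = 0 := by
  obtain ⟨q, hq⟩ := h
  have hkill : killCompl hu (X i : MvPolynomial τ R) = 0 := by
    simp [killCompl, hi]
  rw [← killCompl_rename_app hu p, hq, map_mul, hkill, zero_mul]

end Cancellation

section Antisymmetrization

variable {σ R : Type*} [Fintype σ] [DecidableEq σ] [CommRing R]

/-- The antisymmetrization `∑ e, sign e • e f` of a polynomial `f` over all permutations `e` of the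
variables. -/
noncomputable def antisymmetrize (f : MvPolynomial σ R) : MvPolynomial σ R :=
  ∑ e : Perm σ, Perm.sign e • rename e f

lemma rename_antisymmetrize (e : Perm σ) (f : MvPolynomial σ R) :
    rename e (antisymmetrize f) = Perm.sign e • antisymmetrize f := by
  rw [antisymmetrize, map_sum, Finset.smul_sum]
  refine Fintype.sum_equiv (Equiv.mulLeft e) _ _ fun e' => ?_
  simp only [Units.smul_def, map_zsmul, rename_rename, Equiv.coe_mulLeft, Perm.coe_mul,
    Perm.sign_mul, ← smul_assoc, smul_eq_mul, ← Units.val_mul, ← mul_assoc, Int.units_mul_self,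
    one_mul]

lemma X_sub_X_dvd_antisymmetrize {i j : σ} (hij : i ≠ j) (f : MvPolynomial σ R) :
    X j - X i ∣ antisymmetrize f := by
  rw [X_sub_X_dvd_iff, antisymmetrize, map_sum]
  have hswap : Function.update id j i ∘ swap i j = Function.update id j i := by
    ext k
    simp only [Function.comp_apply, Function.update_apply, swap_apply_def, id]
    grind
  refine Finset.sum_involution (fun e _ => swap i j * e) (fun e _ => ?_) (fun e _ _ he => ?_)
    (fun e _ => Finset.mem_univ _) fun e _ => swap_mul_self_mul i j e
  · simp [Units.smul_def, Perm.sign_swap hij, rename_rename, ← Function.comp_assoc, hswap]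
  · exact hij (swap_eq_one_iff.1 (mul_eq_right.1 he))

lemma antisymmetrize_mul_sub_mem {I : Ideal (MvPolynomial σ R)} {f : MvPolynomial σ R}
    (hf : ∀ e : Perm σ, rename e f - f ∈ I) (g : MvPolynomial σ R) :
    antisymmetrize (g * f) - antisymmetrize g * f ∈ I := by
  simp only [antisymmetrize, Finset.sum_mul, ← Finset.sum_sub_distrib]
  refine I.sum_mem fun e _ => ?_
  rw [map_mul, smul_mul_assoc, ← smul_sub, ← mul_sub]
  exact I.smul_of_tower_mem _ (I.mul_mem_left _ (hf e))

lemma isSymmetric_of_antisymmetrize_eq_mul {f g v : MvPolynomial σ R}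
    (hg : IsRegular (antisymmetrize g)) (h : antisymmetrize f = antisymmetrize g * v) :
    v.IsSymmetric := fun e => by
  have he := congrArg (rename e) h
  rw [map_mul, rename_antisymmetrize, rename_antisymmetrize, h, smul_mul_assoc,
    smul_left_cancel_iff] at he
  exact (hg.left he).symm

end Antisymmetrization

section Vandermonde

variable {n : ℕ} {R : Type*} [CommRing R]

variable (n R) in
/-- The Vandermonde polynomial `∏ i < j, (x_j - x_i)`, defined as a determinant. -/
noncomputable def vandermondePoly : MvPolynomial (Fin n) R :=
  (Matrix.vandermonde X).det

lemma vandermondePoly_eq_prod : vandermondePoly n R =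
    ∏ p ∈ Finset.univ.sigma (Finset.Ioi : Fin n → _), (X p.2 - X p.1) := by
  rw [vandermondePoly, Matrix.det_vandermonde, Finset.prod_sigma']

lemma vandermondePoly_eq_antisymmetrize :
    vandermondePoly n R = antisymmetrize (∏ i : Fin n, X i ^ (i : ℕ)) := by
  simp [vandermondePoly, antisymmetrize, Matrix.det_apply, Matrix.vandermonde_apply]

lemma isRegular_vandermondePoly : IsRegular (vandermondePoly n R) := by
  rw [vandermondePoly_eq_prod]
  refine IsRegular.prod fun p hp => isRegular_X_sub_X ?_
  simpa using (Finset.mem_Ioi.1 (Finset.mem_sigma.1 hp).2).ne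

lemma dvd_of_dvd_vandermondePoly_mul {d f : MvPolynomial (Fin n) R}
    (hd : ∀ i j, i ≠ j → ∀ g, d ∣ (X j - X i) * g → d ∣ g) (h : d ∣ vandermondePoly n R * f) :
    d ∣ f := by
  rw [vandermondePoly_eq_prod] at h
  exact dvd_of_dvd_prod_mul
    (fun p hp => hd _ _ (Finset.mem_Ioi.1 (Finset.mem_sigma.1 hp).2).ne) h

lemma vandermondePoly_dvd_antisymmetrize (f : MvPolynomial (Fin n) R) :
    vandermondePoly n R ∣ antisymmetrize f := by
  rw [vandermondePoly_eq_prod]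
  refine prod_dvd_of_pairwise_dvd_cancel ?_ fun p hp =>
    X_sub_X_dvd_antisymmetrize (Finset.mem_Ioi.1 (Finset.mem_sigma.1 hp).2).ne f
  rintro ⟨i, j⟩ hij ⟨k, l⟩ hkl hne g
  simp only [Finset.coe_sigma, Set.mem_sigma_iff, Finset.coe_Ioi, Set.mem_Ioi] at hij hkl
  refine X_sub_X_dvd_of_dvd_X_sub_X_mul hkl.2.ne ?_
  grind

lemma exists_isSymmetric_sub_mem {I : Ideal (MvPolynomial (Fin n) R)}
    (hI : ∀ g, vandermondePoly n R * g ∈ I → g ∈ I) {f : MvPolynomial (Fin n) R}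
    (hf : ∀ e : Perm (Fin n), rename e f - f ∈ I) :
    ∃ g : MvPolynomial (Fin n) R, g.IsSymmetric ∧ g - f ∈ I := by
  let δ : MvPolynomial (Fin n) R := ∏ i : Fin n, X i ^ (i : ℕ)
  have hδ : vandermondePoly n R = antisymmetrize δ :=
    vandermondePoly_eq_antisymmetrize
  obtain ⟨g, hg⟩ := vandermondePoly_dvd_antisymmetrize (δ * f)
  refine ⟨g, isSymmetric_of_antisymmetrize_eq_mul (hδ ▸ isRegular_vandermondePoly) (hδ ▸ hg),
    hI _ ?_⟩
  rw [mul_sub, ← hg, hδ]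
  exact antisymmetrize_mul_sub_mem hf δ

end Vandermonde

section VarSum

variable (σ R : Type*) [Fintype σ] [CommRing R] (m : ℕ)

/-- The ideal of `R[x_i : i ∈ σ]` generated by the sum of all the variables. -/
noncomputable def varSumIdeal : Ideal (MvPolynomial σ R) :=
  Ideal.span {∑ i, X i}

/-- The action of a permutation of the variables on `R[x_i : i ∈ σ] / (∑ i, x_i)`. -/
noncomputable def varSumQuotPerm (e : Perm σ) :
    MvPolynomial σ R ⧸ varSumIdeal σ R →ₐ[R] MvPolynomial σ R ⧸ varSumIdeal σ R :=
  Ideal.quotientMapₐ (varSumIdeal σ R) (rename e) (by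
    rw [varSumIdeal, Ideal.span_singleton_le_iff_mem, Ideal.mem_comap, map_sum]
    simp only [rename_X, Equiv.sum_comp e (X : σ → MvPolynomial σ R)]
    exact Ideal.mem_span_singleton_self _)

/-- The classes of the elementary symmetric polynomials `w_2, …, w_{m+1}` modulo the sum of the
variables, `w_{i+2}` having index `i`. -/
noncomputable def esymmModVarSum (i : Fin m) : MvPolynomial σ R ⧸ varSumIdeal σ R :=
  Ideal.Quotient.mk _ (esymm σ R (i + 2))

variable {σ R m}

lemma varSumQuotPerm_mk (e : Perm σ) (f : MvPolynomial σ R) :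
    varSumQuotPerm σ R e (Ideal.Quotient.mk _ f) = Ideal.Quotient.mk _ (rename e f) := rfl

lemma varSumQuotPerm_esymmModVarSum (e : Perm σ) (i : Fin m) :
    varSumQuotPerm σ R e (esymmModVarSum σ R m i) = esymmModVarSum σ R m i := by
  rw [esymmModVarSum, varSumQuotPerm_mk, rename_esymm]

lemma aeval_cons_zero_esymmModVarSum (p : MvPolynomial (Fin (m + 1)) R) :
    aeval (Fin.cons 0 (esymmModVarSum σ R m) : Fin (m + 1) → _) p =
      Ideal.Quotient.mk (varSumIdeal σ R) (esymmAlgHom σ R (m + 1) p) := by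
  have hcons : (Fin.cons 0 (esymmModVarSum σ R m) : Fin (m + 1) → _) =
      fun i : Fin (m + 1) => Ideal.Quotient.mkₐ R (varSumIdeal σ R) (esymm σ R (i + 1)) := by
    funext i
    cases i using Fin.cases with
    | zero =>
      rw [Fin.cons_zero, Fin.val_zero, zero_add, esymm_one]
      exact (Ideal.Quotient.eq_zero_iff_mem.2 (Ideal.mem_span_singleton_self _)).symm
    | succ i => rfl
  rw [hcons, esymmAlgHom_apply, ← Ideal.Quotient.mkₐ_eq_mk R, ← AlgHom.comp_apply, comp_aeval]

lemma mk_mem_adjoin_esymmModVarSum (hσ : Fintype.card σ ≤ m + 1) {g : MvPolynomial σ R}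
    (hg : g.IsSymmetric) :
    Ideal.Quotient.mk (varSumIdeal σ R) g ∈
      Algebra.adjoin R (Set.range (esymmModVarSum σ R m)) := by
  obtain ⟨p, hp⟩ := esymmAlgHom_surjective R hσ ⟨g, hg⟩
  have hmem : Ideal.Quotient.mk (varSumIdeal σ R) g ∈
      (aeval (Fin.cons 0 (esymmModVarSum σ R m) : Fin (m + 1) → _)).range :=
    ⟨p, (aeval_cons_zero_esymmModVarSum p).trans (by rw [hp])⟩
  rwa [← Algebra.adjoin_range_eq_range_aeval, Fin.range_cons, Algebra.adjoin_insert_zero] at hmem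

lemma X_zero_dvd_of_esymmAlgHom_mem_varSumIdeal (hσ : Fintype.card σ = m + 1)
    {p : MvPolynomial (Fin (m + 1)) R}
    (hp : (esymmAlgHom σ R (m + 1) p : MvPolynomial σ R) ∈ varSumIdeal σ R) : X 0 ∣ p := by
  have : Nonempty σ := Fintype.card_pos_iff.1 (by omega)
  rw [varSumIdeal, Ideal.mem_span_singleton] at hp
  obtain ⟨h, hh⟩ := hp
  rw [← esymm_one] at hh
  have hreg : IsRegular (esymm σ R 1) := by
    simpa only [esymm_one] using isRegular_sum_X
  have hsymm : h.IsSymmetric :=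
    isSymmetric_of_isRegular_mul hreg (esymm_isSymmetric σ R 1)
      (hh ▸ (esymmAlgHom σ R (m + 1) p).2)
  obtain ⟨q, hq⟩ := esymmAlgHom_surjective R hσ.le ⟨h, hsymm⟩
  refine ⟨q, esymmAlgHom_injective R hσ.ge (Subtype.ext ?_)⟩
  rw [hh, map_mul, hq]
  simp [esymmAlgHom]

lemma algebraicIndependent_esymmModVarSum (hσ : Fintype.card σ = m + 1) :
    AlgebraicIndependent R (esymmModVarSum σ R m) := by
  rw [algebraicIndependent_iff]
  intro p hp
  have hmem : (esymmAlgHom σ R (m + 1) (rename Fin.succ p) : MvPolynomial σ R) ∈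
      varSumIdeal σ R := by
    rw [← Ideal.Quotient.eq_zero_iff_mem, ← aeval_cons_zero_esymmModVarSum, aeval_rename]
    exact hp
  exact eq_zero_of_X_dvd_rename (Fin.succ_injective m) (by simp)
    (X_zero_dvd_of_esymmAlgHom_mem_varSumIdeal hσ hmem)

lemma varSum_dvd_of_dvd_X_sub_X_mul (h2 : Fintype.card σ = 2 → IsRegular (2 : R)) {i j : σ}
    (hij : i ≠ j) {f : MvPolynomial σ R} (h : ∑ k, X k ∣ (X j - X i) * f) : ∑ k, X k ∣ f :=
  dvd_of_dvd_mul_of_dvd_cancel (isRegular_X_sub_X hij)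
    (fun _ => X_sub_X_dvd_of_dvd_sum_X_mul hij h2) h

lemma exists_isSymmetric_mk_eq {n : ℕ} (h2 : n = 2 → IsRegular (2 : R))
    {q : MvPolynomial (Fin n) R ⧸ varSumIdeal (Fin n) R}
    (hq : ∀ e, varSumQuotPerm (Fin n) R e q = q) :
    ∃ g : MvPolynomial (Fin n) R, g.IsSymmetric ∧ Ideal.Quotient.mk _ g = q := by
  obtain ⟨f, rfl⟩ := Ideal.Quotient.mk_surjective q
  simp only [varSumQuotPerm_mk, Ideal.Quotient.eq] at hq ⊢
  refine exists_isSymmetric_sub_mem (fun g hg => ?_) hq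
  rw [varSumIdeal, Ideal.mem_span_singleton] at hg ⊢
  exact dvd_of_dvd_vandermondePoly_mul
    (fun i j hij _ => varSum_dvd_of_dvd_X_sub_X_mul (by simpa using h2) hij) hg

end VarSum

theorem stmt5_general {R : Type*} [CommRing R] (m : ℕ) (h2 : m = 1 → IsRegular (2 : R)) :
    AlgebraicIndependent R (esymmModVarSum (Fin (m + 1)) R m) ∧
      (Algebra.adjoin R (Set.range (esymmModVarSum (Fin (m + 1)) R m)) :
        Set (MvPolynomial (Fin (m + 1)) R ⧸ varSumIdeal (Fin (m + 1)) R)) =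
        {q | ∀ e : Perm (Fin (m + 1)), varSumQuotPerm (Fin (m + 1)) R e q = q} := by
  refine ⟨algebraicIndependent_esymmModVarSum (by simp), Set.Subset.antisymm ?_ fun q hq => ?_⟩
  · intro q hq e
    refine AlgHom.adjoin_le_equalizer (varSumQuotPerm _ R e) (AlgHom.id R _) ?_ hq
    rintro _ ⟨i, rfl⟩
    exact varSumQuotPerm_esymmModVarSum e i
  · obtain ⟨g, hg, rfl⟩ := exists_isSymmetric_mk_eq (by simpa using h2) hq
    exact mk_mem_adjoin_esymmModVarSum (by simp) hg

/-- For `n ≥ 3`, the ring of invariants of `S_n` acting on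
`F_2[x_1, …, x_n]/(x_1 + ⋯ + x_n)` is the polynomial algebra generated by the
images of the elementary symmetric polynomials `w_2, …, w_n`: these images are
algebraically independent and generate the full invariant ring. -/
theorem stmt5 (n : ℕ) (hn : 3 ≤ n) :
    AlgebraicIndependent (ZMod 2)
      (fun i : Fin (n - 1) =>
        Ideal.Quotient.mk (sumIdeal n) (esymm (Fin n) (ZMod 2) ((i : ℕ) + 2))) ∧
    ((Algebra.adjoin (ZMod 2)
        (Set.range fun i : Fin (n - 1) =>
          Ideal.Quotient.mk (sumIdeal n) (esymm (Fin n) (ZMod 2) ((i : ℕ) + 2))) :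
      Set (MvPolynomial (Fin n) (ZMod 2) ⧸ sumIdeal n)) =
      {q | ∀ σ : Equiv.Perm (Fin n), quotAct n σ q = q}) := by
  obtain ⟨m, rfl⟩ : ∃ m, n = m + 1 := ⟨n - 1, by omega⟩
  exact stmt5_general m fun hm => by omega
end

section
/- Let K be a field, W a finite group acting linearly and faithfully on a K-vector space V of dimension k, and let f_1,...,f_k be homogeneous W-invariant polynomials in K[V] such that the inclusion K[f_1,...,f_k] ⊆ K[V] makes K[V] a finitely generated module over K[f_1,...,f_k], and (deg f_1)···(deg f_k) = |W|. Then K[f_1,...,f_k] is a polynomial algebra on f_1,...,f_k and equals the invariant ring K[V]^W. -/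
open MvPolynomial

/-- The action of a linear automorphism `g` of `V = K^k` on the polynomial
algebra `K[V] = K[x_1, …, x_k]` (the dual/substitution action, sending `x_i`
to `∑_j g_{ji} x_j`). -/
noncomputable def polyAct (K : Type) [Field K] (k : ℕ)
    (g : (Fin k → K) ≃ₗ[K] (Fin k → K)) :
    MvPolynomial (Fin k) K →ₐ[K] MvPolynomial (Fin k) K :=
  aeval fun i : Fin k =>
    ∑ j : Fin k,
      C (LinearMap.toMatrix (Pi.basisFun K (Fin k)) (Pi.basisFun K (Fin k))
          g.toLinearMap j i) * X j

/-!
Put `S = K[V]` and `A = K[f_1, …, f_k]`. As `S` is algebraic over `A` and has transcendence degree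
`k`, the `f_i` are algebraically independent.

If `e_1, …, e_r` in `S` are linearly independent over `A`, the products of the `e_j` with the
monomials in the `f_i` are linearly independent over `K`. Comparing their number in bounded degree
with the number of monomials in the variables gives `r N(n) ≤ (∏ deg f_i) N(n + D)`, where `N(n)`
counts monomials of degree at most `n`. As `N` grows polynomially, `r ≤ ∏ deg f_i`: this bounds the
rank of `S` over `A`.

On the other hand Dedekind's independence of characters provides `|W|` elements of `S` that are
linearly independent over the ring of invariants. An invariant `b` outside the integrally closed
ring `A` is independent from `1` over `A`, so it would force the rank of `S` over `A` to be at least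
`2 |W|`.
-/

open Asymptotics Filter

section Counting

variable {σ : Type*}

/-- The number of exponent vectors `a` with `∑ i, w i * a i ≤ n`, that is, of monomials of weighted
degree at most `n`; the value is meaningful only when this set is finite (`Set.ncard` of an infinite
set is `0`). -/
noncomputable def weightCount (w : σ → ℕ) (n : ℕ) : ℕ :=
  {a : σ →₀ ℕ | Finsupp.weight w a ≤ n}.ncard

theorem weightCount_pos [Finite σ] {w : σ → ℕ} (hw : ∀ i, w i ≠ 0) (n : ℕ) :
    0 < weightCount w n :=
  (Set.ncard_pos (Finsupp.finite_of_nat_weight_le w hw n)).2 ⟨0, by simp⟩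

theorem weightCount_le_pow [Fintype σ] {w : σ → ℕ} (hw : ∀ i, w i ≠ 0) (n : ℕ) :
    weightCount w n ≤ (n + 1) ^ Fintype.card σ := by
  classical
  have hbox : (Fintype.piFinset fun _ : σ ↦ Finset.range (n + 1)).card =
      (n + 1) ^ Fintype.card σ := by simp
  rw [← hbox, ← Set.ncard_coe_finset]
  refine Set.ncard_le_ncard_of_injOn (fun a ↦ ⇑a) (fun a ha ↦ ?_) DFunLike.coe_injective.injOn
  rw [Finset.mem_coe, Fintype.mem_piFinset]
  exact fun i ↦ Finset.mem_range_succ_iff.2 ((Finsupp.le_weight w (hw i) a).trans ha)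

theorem weightCount_one_le_prod_mul [Fintype σ] {w : σ → ℕ} (hw : ∀ i, w i ≠ 0) (n : ℕ) :
    weightCount (1 : σ → ℕ) n ≤ (∏ i, w i) * weightCount w n := by
  classical
  have hbox : (Fintype.piFinset fun i ↦ Finset.range (w i)).card = ∏ i, w i := by simp
  rw [← hbox, ← Set.ncard_coe_finset, weightCount, weightCount, ← Set.ncard_prod]
  refine Set.ncard_le_ncard_of_injOn
    (fun a ↦ (fun i ↦ a i % w i, Finsupp.equivFunOnFinite.symm fun i ↦ a i / w i))
    (fun a ha ↦ ⟨?_, ?_⟩) (fun a _ b _ hab ↦ ?_)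
    ((Finset.finite_toSet _).prod (Finsupp.finite_of_nat_weight_le w hw n))
  · rw [Finset.mem_coe, Fintype.mem_piFinset]
    exact fun i ↦ Finset.mem_range.2 (Nat.mod_lt _ (Nat.pos_of_ne_zero (hw i)))
  · rw [Set.mem_ofPred_eq, Finsupp.weight_eq_sum] at ha ⊢
    exact (Finset.sum_le_sum fun i _ ↦ by simpa using Nat.div_mul_le_self (a i) (w i)).trans ha
  · ext i
    have hmod : a i % w i = b i % w i := congrFun (congrArg Prod.fst hab) i
    have hdiv : a i / w i = b i / w i := DFunLike.congr_fun (congrArg Prod.snd hab) i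
    rw [← Nat.div_add_mod (a i) (w i), hmod, hdiv, Nat.div_add_mod]

theorem finrank_restrictTotalDegree (R : Type*) [CommRing R] [Nontrivial R] [Finite σ] (n : ℕ) :
    Module.finrank R (restrictTotalDegree σ R n) = weightCount (1 : σ → ℕ) n := by
  refine (Module.finrank_eq_nat_card_basis (basisRestrictSupport R _)).trans ?_
  rw [Nat.card_coe_set_eq, weightCount]
  congr! 4 with a
  exact DFunLike.congr_fun Finsupp.degree_eq_weight_one a

end Counting

section Growth

theorem le_of_pow_isBigO_pow_mul_pow {a b : ℝ} (hb : 0 ≤ b) (k : ℕ)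
    (h : (fun m : ℕ ↦ a ^ m) =O[atTop] fun m ↦ (m : ℝ) ^ k * b ^ m) : a ≤ b := by
  by_contra! hba
  have hne (m : ℕ) : a ^ m ≠ 0 := (pow_pos (hb.trans_lt hba) m).ne'
  refine h.not_isLittleO (.of_forall hne) ?_
  exact isLittleO_pow_const_mul_const_pow_const_pow_of_norm_lt k (by rwa [Real.norm_of_nonneg hb])

theorem pow_mul_le_pow_mul_of_forall_mul_le {u : ℕ → ℝ} {r p : ℝ} {D : ℕ} (hr : 0 ≤ r) (hp : 0 ≤ p)
    (h : ∀ n, r * u n ≤ p * u (n + D)) (m : ℕ) : r ^ m * u 0 ≤ p ^ m * u (m * D) := by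
  induction m with
  | zero => simp
  | succ m ih =>
    calc r ^ (m + 1) * u 0 = r * (r ^ m * u 0) := by ring
      _ ≤ r * (p ^ m * u (m * D)) := by gcongr
      _ = p ^ m * (r * u (m * D)) := by ring
      _ ≤ p ^ m * (p * u (m * D + D)) := mul_le_mul_of_nonneg_left (h _) (by positivity)
      _ = p ^ (m + 1) * u ((m + 1) * D) := by rw [add_one_mul]; ring

theorem le_of_forall_mul_le_mul_shift {u : ℕ → ℝ} {r p : ℝ} {k D : ℕ} (hr : 0 ≤ r) (hp : 0 ≤ p)
    (hpos : 0 < u 0) (hpoly : ∀ n : ℕ, u n ≤ (n + 1) ^ k)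
    (h : ∀ n, r * u n ≤ p * u (n + D)) : r ≤ p := by
  have hlin : (fun m : ℕ ↦ ((m * D : ℕ) : ℝ) + 1) =O[atTop] fun m : ℕ ↦ (m : ℝ) := by
    refine .of_bound (D + 1) ((eventually_ge_atTop 1).mono fun m hm ↦ ?_)
    have : (1 : ℝ) ≤ m := by exact_mod_cast hm
    rw [Real.norm_of_nonneg (by positivity), Real.norm_of_nonneg (by positivity)]
    push_cast
    linarith
  have hpow : (fun m : ℕ ↦ r ^ m * u 0) =O[atTop] fun m ↦ p ^ m * (((m * D : ℕ) : ℝ) + 1) ^ k := by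
    refine .of_norm_le fun m ↦ ?_
    rw [Real.norm_of_nonneg (by positivity)]
    exact (pow_mul_le_pow_mul_of_forall_mul_le hr hp h m).trans (by gcongr; exact hpoly _)
  refine le_of_pow_isBigO_pow_mul_pow hp k ?_
  have hconst : (fun m : ℕ ↦ r ^ m) =O[atTop] fun m ↦ r ^ m * u 0 := by
    simpa only [mul_comm] using isBigO_self_const_mul hpos.ne' (fun m : ℕ ↦ r ^ m) atTop
  refine (hconst.trans hpow).trans ?_
  simpa only [mul_comm] using (isBigO_refl (fun m : ℕ ↦ p ^ m) atTop).mul (hlin.pow k)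

end Growth

section RankBound

variable {σ ι R : Type*} [CommRing R]

theorem linearIndependent_aeval_monomial_mul {S : Type*} [CommRing S] [Algebra R S] {f : σ → S}
    (hf : AlgebraicIndependent R f) {e : ι → S}
    (he : LinearIndependent (Algebra.adjoin R (Set.range f)) e) :
    LinearIndependent R fun p : (σ →₀ ℕ) × ι ↦ aeval f (monomial p.1 (1 : R)) * e p.2 := by
  have hmon : LinearIndependent R fun a ↦ hf.aevalEquiv (monomial a 1) := by
    have := (basisMonomials σ R).linearIndependent.map' hf.aevalEquiv.toLinearMap
      (LinearMap.ker_eq_bot.2 hf.aevalEquiv.injective)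
    rwa [coe_basisMonomials] at this
  simpa only [Subalgebra.smul_def, smul_eq_mul, hf.aevalEquiv_apply_coe] using
    linearIndependent_smul hmon he

theorem totalDegree_aeval_monomial_le {τ : Type*} (f : σ → MvPolynomial τ R) (a : σ →₀ ℕ) :
    (aeval f (monomial a (1 : R))).totalDegree ≤
      Finsupp.weight (fun i ↦ (f i).totalDegree) a := by
  rw [aeval_monomial, map_one, one_mul, Finsupp.weight_apply]
  exact (totalDegree_finsetProd _ _).trans (Finset.sum_le_sum fun i _ ↦ totalDegree_pow _ _)

theorem totalDegree_ne_zero_of_transcendental [Nontrivial R] {p : MvPolynomial σ R}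
    (hp : Transcendental R p) : p.totalDegree ≠ 0 := fun h ↦
  hp <| totalDegree_eq_zero_iff_eq_C.1 h ▸ isAlgebraic_algebraMap (p.coeff 0)

theorem card_mul_weightCount_le [Nontrivial R] [Finite σ] [Finite ι] {f : σ → MvPolynomial σ R}
    (hf : AlgebraicIndependent R f) {e : ι → MvPolynomial σ R}
    (he : LinearIndependent (Algebra.adjoin R (Set.range f)) e) {D : ℕ}
    (hD : ∀ j, (e j).totalDegree ≤ D) (n : ℕ) :
    Nat.card ι * weightCount (fun i ↦ (f i).totalDegree) n ≤ weightCount (1 : σ → ℕ) (n + D) := by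
  set d : σ → ℕ := fun i ↦ (f i).totalDegree
  have hd (i : σ) : d i ≠ 0 := totalDegree_ne_zero_of_transcendental (hf.transcendental i)
  let E : Set (σ →₀ ℕ) := {a | Finsupp.weight d a ≤ n}
  have : Finite E := Finsupp.finite_of_nat_weight_le d hd n
  have hmem (p : E × ι) : aeval f (monomial p.1.1 (1 : R)) * e p.2 ∈
      restrictTotalDegree σ R (n + D) := by
    rw [mem_restrictTotalDegree]
    exact (totalDegree_mul _ _).trans
      (add_le_add ((totalDegree_aeval_monomial_le f p.1.1).trans p.1.2) (hD p.2))
  have hli : LinearIndependent R fun p ↦ (⟨_, hmem p⟩ : restrictTotalDegree σ R (n + D)) :=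
    .of_comp (restrictTotalDegree σ R (n + D)).subtype <|
      (linearIndependent_aeval_monomial_mul hf he).comp (Prod.map Subtype.val id)
        (Subtype.val_injective.prodMap Function.injective_id)
  have := Fintype.ofFinite (E × ι)
  calc Nat.card ι * weightCount d n = Fintype.card (E × ι) := by
        rw [← Nat.card_eq_fintype_card, Nat.card_prod, mul_comm, weightCount, Nat.card_coe_set_eq]
    _ ≤ Module.finrank R (restrictTotalDegree σ R (n + D)) := hli.fintype_card_le_finrank
    _ = weightCount 1 (n + D) := finrank_restrictTotalDegree R (n + D)

theorem card_le_prod_totalDegree [Nontrivial R] [Fintype σ] [Finite ι] {f : σ → MvPolynomial σ R}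
    (hf : AlgebraicIndependent R f) {e : ι → MvPolynomial σ R}
    (he : LinearIndependent (Algebra.adjoin R (Set.range f)) e) :
    Nat.card ι ≤ ∏ i, (f i).totalDegree := by
  have hd (i : σ) : (f i).totalDegree ≠ 0 :=
    totalDegree_ne_zero_of_transcendental (hf.transcendental i)
  obtain ⟨D, hD⟩ := (Set.finite_range fun j ↦ (e j).totalDegree).bddAbove
  have hshift (n : ℕ) : Nat.card ι * weightCount (1 : σ → ℕ) n ≤
      (∏ i, (f i).totalDegree) * weightCount (1 : σ → ℕ) (n + D) :=
    calc Nat.card ι * weightCount (1 : σ → ℕ) n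
        ≤ Nat.card ι * ((∏ i, (f i).totalDegree) * weightCount (fun i ↦ (f i).totalDegree) n) :=
          Nat.mul_le_mul_left _ (weightCount_one_le_prod_mul hd n)
      _ = (∏ i, (f i).totalDegree) *
            (Nat.card ι * weightCount (fun i ↦ (f i).totalDegree) n) := Nat.mul_left_comm ..
      _ ≤ (∏ i, (f i).totalDegree) * weightCount (1 : σ → ℕ) (n + D) :=
          Nat.mul_le_mul_left _
            (card_mul_weightCount_le hf he (fun j ↦ hD (Set.mem_range_self j)) n)
  have hone (i : σ) : (1 : σ → ℕ) i ≠ 0 := one_ne_zero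
  exact_mod_cast le_of_forall_mul_le_mul_shift (u := fun n ↦ (weightCount (1 : σ → ℕ) n : ℝ))
    (r := Nat.card ι) (p := (∏ i, (f i).totalDegree : ℕ)) (Nat.cast_nonneg _) (Nat.cast_nonneg _)
    (by exact_mod_cast weightCount_pos hone 0)
    (fun n ↦ by exact_mod_cast weightCount_le_pow hone n) (fun n ↦ by exact_mod_cast hshift n)

theorem rank_adjoin_range_le_prod_totalDegree [Nontrivial R] [Fintype σ] {f : σ → MvPolynomial σ R}
    (hf : AlgebraicIndependent R f) :
    Module.rank (Algebra.adjoin R (Set.range f)) (MvPolynomial σ R) ≤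
      (∏ i, (f i).totalDegree : ℕ) :=
  rank_le fun s hs ↦ by simpa using card_le_prod_totalDegree hf hs

end RankBound

section FixedPoints

theorem span_range_eval_eq_top {M L W : Type*} [Monoid M] [Field L] [Finite W] {χ : W → M →* L}
    (hχ : Function.Injective χ) : Submodule.span L (Set.range fun s w ↦ χ w s) = ⊤ := by
  classical
  have := Fintype.ofFinite W
  by_contra hne
  obtain ⟨φ, hφ, hker⟩ := Submodule.exists_le_ker_of_lt_top _ (lt_top_iff_ne_top.2 hne)
  obtain ⟨c, rfl⟩ := (dotProductEquiv L W).surjective φ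
  -- The functional `c` vanishes on the span: it is a linear relation among the distinct characters.
  have hsum : ∑ w, c w • ⇑(χ w) = 0 := by
    ext s
    simpa [dotProduct] using hker (Submodule.subset_span ⟨s, rfl⟩)
  have hc : c = 0 := funext <| Fintype.linearIndependent_iff.1
    ((linearIndependent_monoidHom M L).comp χ hχ) c hsum
  exact hφ (by rw [hc, map_zero])

theorem exists_linearIndependent_eval {M L W : Type*} [Monoid M] [Field L] [Finite W]
    {χ : W → M →* L} (hχ : Function.Injective χ) :
    ∃ s : W → M, LinearIndependent L fun i w ↦ χ w (s i) := by
  have := Fintype.ofFinite W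
  obtain ⟨v, hv, -, hli⟩ :=
    Submodule.exists_fun_fin_finrank_span_eq L (Set.range fun s w ↦ χ w s)
  have hcard : Fintype.card W =
      Module.finrank L (Submodule.span L (Set.range fun s w ↦ χ w s)) := by
    rw [span_range_eval_eq_top hχ, finrank_top, Module.finrank_fintype_fun_eq_card]
  choose s hs using hv
  refine ⟨s ∘ Fintype.equivFinOfCardEq hcard, ?_⟩
  rw [← funext hs] at hli
  exact hli.comp _ (Fintype.equivFinOfCardEq hcard).injective

theorem exists_linearIndependent_of_injective_algHom {B S T W : Type*} [CommRing B] [CommRing S]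
    [CommRing T] [IsDomain T] [Algebra B S] [Algebra B T] [FaithfulSMul B T] [Finite W]
    {φ : W → S →ₐ[B] T} (hφ : Function.Injective φ) :
    ∃ s : W → S, LinearIndependent B s := by
  let L := FractionRing T
  let χ (w : W) : S →* L := ((IsScalarTower.toAlgHom B T L).comp (φ w) : S →* L)
  have hχ : Function.Injective χ := fun w w' h ↦ hφ <| AlgHom.ext fun s ↦
    IsFractionRing.injective T L (DFunLike.congr_fun h s)
  obtain ⟨s, hs⟩ := exists_linearIndependent_eval hχ
  refine ⟨s, .of_comp (LinearMap.pi fun w ↦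
    ((IsScalarTower.toAlgHom B T L).comp (φ w)).toLinearMap) ?_⟩
  refine hs.restrict_scalars ?_
  simpa only [← Algebra.algebraMap_eq_smul_one] using FaithfulSMul.algebraMap_injective B L

theorem linearIndependent_one_pair_of_notMem_range {A S : Type*} [CommRing A] [IsDomain A]
    [IsIntegrallyClosed A] [CommRing S] [IsDomain S] [Algebra A S] [Module.IsTorsionFree A S]
    {b : S} (hb : IsIntegral A b) (hmem : b ∉ (algebraMap A S).range) :
    LinearIndependent A ![1, b] := by
  refine LinearIndependent.pair_iff.2 fun x y hxy ↦ ?_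
  let p : Polynomial A := .C y * .X + .C x
  have hroot : Polynomial.aeval b p = 0 := by
    simpa [p, Algebra.smul_def, add_comm] using hxy
  have hp : p = 0 := by
    by_contra hp
    have hle := Polynomial.natDegree_le_of_dvd (minpoly.isIntegrallyClosed_dvd hb hroot) hp
    have htwo := (minpoly.two_le_natDegree_iff hb).2 hmem
    have hlin : p.natDegree ≤ 1 := Polynomial.natDegree_linear_le
    lia
  exact ⟨by simpa [p] using congrArg (Polynomial.coeff · 0) hp,
    by simpa [p] using congrArg (Polynomial.coeff · 1) hp⟩

theorem mem_range_algebraMap_of_rank_lt {A S W : Type*} [CommRing A] [IsDomain A]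
    [IsIntegrallyClosed A] [CommRing S] [IsDomain S] [Algebra A S] [Module.IsTorsionFree A S]
    [Algebra.IsIntegral A S] {φ : W → S →ₐ[A] S} (hφ : Function.Injective φ)
    (hrank : Module.rank A S < (2 * Nat.card W : ℕ)) {b : S} (hb : ∀ w, φ w b = b) :
    b ∈ (algebraMap A S).range := by
  by_contra hmem
  have : Finite W := Nat.finite_of_card_ne_zero fun h ↦ by simp [h] at hrank
  let B : Subalgebra A S := ⨅ w, AlgHom.equalizer (φ w) (AlgHom.id A S)
  have hB {x : S} : x ∈ B ↔ ∀ w, φ w x = x := by simp [B, Algebra.mem_iInf]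
  let ψ (w : W) : S →ₐ[B] S := { φ w with commutes' := fun r ↦ hB.1 r.2 w }
  have hψ : Function.Injective ψ := fun w w' h ↦ hφ <| AlgHom.ext fun s ↦ DFunLike.congr_fun h s
  obtain ⟨s, hs⟩ := exists_linearIndependent_of_injective_algHom hψ
  have hpair : LinearIndependent A ![1, (⟨b, hB.2 hb⟩ : B)] :=
    linearIndependent_one_pair_of_notMem_range
      ((isIntegral_algHom_iff B.val Subtype.val_injective).1 (Algebra.IsIntegral.isIntegral b))
      fun ⟨a, ha⟩ ↦ hmem ⟨a, congrArg Subtype.val ha⟩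
  have hlt := (linearIndependent_smul hpair hs).cardinal_lift_le_rank.trans_lt
    (Cardinal.lift_lt_nat_iff.2 hrank)
  simp [← Nat.cast_card] at hlt

end FixedPoints

theorem isIntegrallyClosed_mvPolynomial (σ R : Type*) [Finite σ] [CommRing R] [IsDomain R]
    [IsIntegrallyClosed R] : IsIntegrallyClosed (MvPolynomial σ R) := by
  induction σ using Finite.induction_empty_option with
  | of_equiv e h => exact .of_equiv (renameEquiv R e).toRingEquiv
  | h_empty => exact .of_equiv (isEmptyRingEquiv R PEmpty).symm
  | h_option h => exact .of_equiv (optionEquivLeft R _).symm.toRingEquiv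

theorem stmt7_general {R σ W : Type*} [CommRing R] [IsDomain R] [IsIntegrallyClosed R] [Fintype σ]
    {φ : W → MvPolynomial σ R →ₐ[R] MvPolynomial σ R} (hφ : Function.Injective φ)
    {f : σ → MvPolynomial σ R} (hinv : ∀ i w, φ w (f i) = f i)
    (hintegral : Algebra.IsIntegral (Algebra.adjoin R (Set.range f)) (MvPolynomial σ R))
    (hdeg : ∏ i, (f i).totalDegree < 2 * Nat.card W) :
    AlgebraicIndependent R f ∧
      (Algebra.adjoin R (Set.range f) : Set (MvPolynomial σ R)) = {p | ∀ w, φ w p = p} := by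
  have hf : AlgebraicIndependent R f :=
    (Algebra.IsAlgebraic.isTranscendenceBasis_of_lift_le_trdeg_of_finite R f (by simp)).1
  let A := Algebra.adjoin R (Set.range f)
  have hA (w : W) : A ≤ AlgHom.equalizer (φ w) (AlgHom.id R _) :=
    Algebra.adjoin_le (Set.range_subset_iff.2 fun i ↦ hinv i w)
  refine ⟨hf, Set.Subset.antisymm (fun p hp w ↦ hA w hp) fun p hp ↦ ?_⟩
  have := isIntegrallyClosed_mvPolynomial σ R
  have : IsIntegrallyClosed A := .of_equiv hf.aevalEquiv.toRingEquiv
  let ψ (w : W) : MvPolynomial σ R →ₐ[A] MvPolynomial σ R :=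
    { φ w with commutes' := fun a ↦ hA w a.2 }
  have hψ : Function.Injective ψ := fun w w' h ↦ hφ <| AlgHom.ext fun p ↦ DFunLike.congr_fun h p
  obtain ⟨a, rfl⟩ := mem_range_algebraMap_of_rank_lt hψ
    ((rank_adjoin_range_le_prod_totalDegree hf).trans_lt (by exact_mod_cast hdeg)) hp
  exact a.2

theorem polyAct_injective (K : Type) [Field K] (k : ℕ) : Function.Injective (polyAct K k) := by
  intro g h hgh
  apply LinearEquiv.toLinearMap_injective
  apply (LinearMap.toMatrix (Pi.basisFun K (Fin k)) (Pi.basisFun K (Fin k))).injective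
  ext j i
  have hcoeff := congrArg (coeff (Finsupp.single j 1)) (DFunLike.congr_fun hgh (X i))
  simpa [polyAct, coeff_sum, coeff_C_mul, coeff_X, Finsupp.single_left_inj] using hcoeff

/-- Smith's Proposition 5.5.5: if a finite group `W` acts linearly and
faithfully on `V = K^k`, and `f_1, …, f_k` are homogeneous `W`-invariant
polynomials over which `K[V]` is module-finite with `∏ deg f_i = |W|`, then
the `f_i` are algebraically independent (so generate a polynomial algebra) and
generate the full invariant ring `K[V]^W`. -/
theorem stmt7 {K : Type} [Field K] {W : Type} [Group W] [Finite W] (k : ℕ)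
    (ρ : W →* ((Fin k → K) ≃ₗ[K] (Fin k → K)))
    (hfaithful : Function.Injective ρ)
    (f : Fin k → MvPolynomial (Fin k) K) (d : Fin k → ℕ)
    (hhom : ∀ i, (f i).IsHomogeneous (d i))
    (hinv : ∀ (i : Fin k) (w : W), polyAct K k (ρ w) (f i) = f i)
    (hfin : Module.Finite (Algebra.adjoin K (Set.range f)) (MvPolynomial (Fin k) K))
    (hdeg : ∏ i, d i = Nat.card W) :
    AlgebraicIndependent K f ∧
    ((Algebra.adjoin K (Set.range f) : Set (MvPolynomial (Fin k) K)) =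
      {p | ∀ w : W, polyAct K k (ρ w) p = p}) := by
  have hle : ∏ i, (f i).totalDegree ≤ Nat.card W :=
    hdeg ▸ Finset.prod_le_prod' fun i _ ↦ (hhom i).totalDegree_le
  have hpos : 0 < Nat.card W := Nat.card_pos
  exact stmt7_general ((polyAct_injective K k).comp hfaithful) hinv (.of_finite _ _) (by lia)
end
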